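/- Let g ∈ G. For every X ∈ L^1, ES^g(X) = sup_{Q ∈ P^∞_P} { E_Q[X] − g(1 − ‖dQ/dP‖_∞^{−1}) }, where P^∞_P denotes the set of probability measures Q on the underlying measurable space that are absolutely continuous with respect to P and whose Radon–Nikodym density dQ/dP is essentially bounded. -/

import Mathlib

open MeasureTheory Set Filter

variable {Ω : Type*} [MeasurableSpace Ω]

/-- An atomless probability space: every set of positive measure has a subset of
strictly smaller positive measure. -/
def Atomless (μ : Measure Ω) : Prop :=
  ∀ A : Set Ω, MeasurableSet A → 0 < μ A →
    ∃ B : Set Ω, MeasurableSet B ∧ B ⊆ A ∧ 0 < μ B ∧ μ B < μ A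

/-- Value at Risk at level `p`: the left `p`-quantile for `p ∈ (0,1]`, the essential
infimum for `p = 0`.  Values are extended reals. -/
noncomputable def VaR (μ : Measure Ω) (X : Ω → ℝ) (p : ℝ) : EReal :=
  if p = 0 then essInf (fun ω => (X ω : EReal)) μ
  else sInf ((fun x : ℝ => (x : EReal)) '' {x : ℝ | ENNReal.ofReal p ≤ μ {ω | X ω ≤ x}})

/-- Real-valued version of the left `p`-quantile, used as the integrand of ES. -/
noncomputable def VaRr (μ : Measure Ω) (X : Ω → ℝ) (p : ℝ) : ℝ :=
  sInf {x : ℝ | ENNReal.ofReal p ≤ μ {ω | X ω ≤ x}}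

/-- Expected Shortfall at level `p`: `(1/(1-p)) ∫_p^1 VaR_q(X) dq` for `p ∈ [0,1)`,
the essential supremum for `p = 1`. -/
noncomputable def ES (μ : Measure Ω) (X : Ω → ℝ) (p : ℝ) : EReal :=
  if p = 1 then essSup (fun ω => (X ω : EReal)) μ
  else (((1 - p)⁻¹ * ∫ q in Set.Ioo p 1, VaRr μ X q : ℝ) : EReal)

/-- The `g`-adjusted Expected Shortfall, `sup_{p ∈ [0,1]} (ES_p(X) - g(p))`.
Note that in `EReal` one has `⊤ - ⊤ = ⊥`, matching the convention `∞ - ∞ = -∞`. -/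
noncomputable def adjES (μ : Measure Ω) (g : ℝ → EReal) (X : Ω → ℝ) : EReal :=
  ⨆ p ∈ Set.Icc (0:ℝ) 1, (ES μ X p - g p)

/-- The class `𝒢` of risk profiles: increasing functions `[0,1] → (-∞,∞]` that are
not identically `∞`. -/
def IsRiskProfile (g : ℝ → EReal) : Prop :=
  MonotoneOn g (Set.Icc (0:ℝ) 1) ∧ (∀ p ∈ Set.Icc (0:ℝ) 1, g p ≠ ⊥) ∧
    ∃ p ∈ Set.Icc (0:ℝ) 1, g p ≠ ⊤

/-- Second-order stochastic dominance: `SSD μ X Y` means `X ≥_SSD Y`, i.e. every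
risk-averse agent prefers `X` to `Y` (positive values are losses). -/
def SSD (μ : Measure Ω) (X Y : Ω → ℝ) : Prop :=
  ∀ u : ℝ → ℝ, Monotone u → ConcaveOn ℝ Set.univ u →
    ∫ ω, u (-(Y ω)) ∂μ ≤ ∫ ω, u (-(X ω)) ∂μ

/-- The inf-convolution of the functionals `ρ_1, …, ρ_n`. -/
noncomputable def infConv (μ : Measure Ω) {n : ℕ} (ρ : Fin n → ((Ω → ℝ) → EReal))
    (X : Ω → ℝ) : EReal :=
  ⨅ (Y : Fin n → Ω → ℝ) (_ : (∀ i, Integrable (Y i) μ) ∧ ∀ ω, (∑ i, Y i ω) = X ω),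
    ∑ i, ρ i (Y i)

/-- The class `𝒢_VaR`: risk profiles finite on `[0,1)`, left-continuous on `[0,1]`
and right-continuous at `0`. -/
def GVaRProfile (g : ℝ → EReal) : Prop :=
  IsRiskProfile g ∧ (∀ p ∈ Set.Ico (0:ℝ) 1, g p ≠ ⊤) ∧
    (∀ p ∈ Set.Ioc (0:ℝ) 1, Filter.Tendsto g (nhdsWithin p (Set.Ico 0 p)) (nhds (g p))) ∧
    Filter.Tendsto g (nhdsWithin 0 (Set.Ioc 0 1)) (nhds (g 0))

/-- The class `𝒢_ES`: profiles in `𝒢_VaR` such that `h_g(p) = (1-p)g(p)` is concave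
on `(0,1)` and left-continuous at `1` (with `h_g(1) = 0` by the convention `0·∞ = 0`). -/
def GESProfile (g : ℝ → EReal) : Prop :=
  GVaRProfile g ∧ ConcaveOn ℝ (Set.Ioo (0:ℝ) 1) (fun p => (1 - p) * (g p).toReal) ∧
    Filter.Tendsto (fun p => (1 - p) * (g p).toReal) (nhdsWithin 1 (Set.Ico (0:ℝ) 1)) (nhds 0)

/-!
With `p = 1 - C⁻¹`, the bound `dQ/dμ ≤ C` reads `Q ≤ (1 - p)⁻¹ • μ`. Splitting `X` at its
`p`-quantile `t` as `X ≤ t + (X - t)⁺` bounds the `Q`-mean of every such `Q` by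
`t + (1 - p)⁻¹ 𝔼[(X - t)⁺] = ES_p(X)`. Equality holds for the `Q` of density `(1 - p)⁻¹` on
`{t < X}` which puts the rest of its mass on `{X = t}`. At `p = 1` the conditional laws
`μ[· | a < X]`, for `a` below the essential supremum, take the place of the maximizer. The two
suprema then agree since `Q` is penalized at the smallest `p` allowed by its density and `g` is
increasing.
-/

open ProbabilityTheory

open scoped ENNReal NNReal

/-- The set `𝒫^∞_P` of probability measures with essentially bounded density with respect to `μ`,
over which the dual problem is posed. -/
def boundedDensityMeasures (μ : Measure Ω) : Set (Measure Ω) :=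
  {Q | IsProbabilityMeasure Q ∧ Q ≪ μ ∧ essSup (Q.rnDeriv μ) μ < ⊤}

/-- The level `1 - ‖dQ/dμ‖_∞⁻¹` at which `Q` is penalized in the dual problem. The supremum norm is
read off in `ℝ`, so the level is meaningful only for `Q ∈ boundedDensityMeasures μ`. -/
noncomputable def densityLevel (μ Q : Measure Ω) : ℝ :=
  1 - (essSup (Q.rnDeriv μ) μ).toReal⁻¹

section Density

variable {μ Q : Measure Ω}

lemma essSup_rnDeriv_le_iff [SigmaFinite μ] [Q.HaveLebesgueDecomposition μ] (hQ : Q ≪ μ)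
    {C : ℝ≥0∞} : essSup (Q.rnDeriv μ) μ ≤ C ↔ Q ≤ C • μ := by
  constructor
  · intro h
    calc Q = μ.withDensity (Q.rnDeriv μ) := (Measure.withDensity_rnDeriv_eq Q μ hQ).symm
      _ ≤ μ.withDensity fun _ => C :=
        withDensity_mono ((ENNReal.ae_le_essSup _).mono fun _ hω => hω.trans h)
      _ = C • μ := withDensity_const C
  · intro h
    refine essSup_le_of_ae_le C (ae_le_of_forall_setLIntegral_le_of_sigmaFinite
      (Measure.measurable_rnDeriv Q μ) fun s _ _ => ?_)
    calc ∫⁻ ω in s, Q.rnDeriv μ ω ∂μ ≤ Q s := Measure.setLIntegral_rnDeriv_le s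
      _ ≤ (C • μ) s := h s
      _ = ∫⁻ _ in s, C ∂μ := by simp

lemma mem_boundedDensityMeasures_of_le_smul [SigmaFinite μ] [IsProbabilityMeasure Q] {C : ℝ≥0∞}
    (hC : C ≠ ∞) (h : Q ≤ C • μ) : Q ∈ boundedDensityMeasures μ :=
  have hQ : Q ≪ μ := Measure.absolutelyContinuous_of_le_smul h
  ⟨inferInstance, hQ, ((essSup_rnDeriv_le_iff hQ).2 h).trans_lt hC.lt_top⟩

variable [IsProbabilityMeasure μ]

lemma one_le_toReal_essSup_rnDeriv (hQ : Q ∈ boundedDensityMeasures μ) :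
    1 ≤ (essSup (Q.rnDeriv μ) μ).toReal := by
  obtain ⟨_, hac, hfin⟩ := hQ
  have hle : Q univ ≤ (essSup (Q.rnDeriv μ) μ • μ) univ :=
    (essSup_rnDeriv_le_iff hac).1 le_rfl univ
  rw [Measure.smul_apply, measure_univ, measure_univ, smul_eq_mul, mul_one] at hle
  simpa using ENNReal.toReal_mono hfin.ne hle

lemma densityLevel_mem_Ico (hQ : Q ∈ boundedDensityMeasures μ) :
    densityLevel μ Q ∈ Ico (0 : ℝ) 1 := by
  have hC := one_le_toReal_essSup_rnDeriv hQ
  exact ⟨sub_nonneg.2 (inv_le_one_of_one_le₀ hC), sub_lt_self _ (by positivity)⟩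

lemma densityLevel_le_iff (hQ : Q ∈ boundedDensityMeasures μ) {p : ℝ} (hp : p < 1) :
    densityLevel μ Q ≤ p ↔ Q ≤ ENNReal.ofReal (1 - p)⁻¹ • μ := by
  have hC := one_le_toReal_essSup_rnDeriv hQ
  obtain ⟨_, hac, hfin⟩ := hQ
  rw [densityLevel, sub_le_comm, le_inv_comm₀ (sub_pos.2 hp) (by positivity),
    ← essSup_rnDeriv_le_iff hac, ENNReal.le_ofReal_iff_toReal_le hfin.ne]
  exact inv_nonneg.2 (sub_nonneg.2 hp.le)

end Density

section PositivePart

variable {μ Q : Measure Ω} [IsFiniteMeasure μ] {X : Ω → ℝ}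

lemma integrable_max_sub_zero (hX : Integrable X μ) (t : ℝ) :
    Integrable (fun ω => max (X ω - t) 0) μ :=
  (hX.sub (integrable_const t)).pos_part

lemma setIntegral_eq_mul_add_integral_max_sub (hX : Integrable X μ) {A : Set Ω} {t : ℝ}
    (hA : NullMeasurableSet A μ) (hmem : ∀ᵐ ω ∂μ, ω ∈ A → t ≤ X ω)
    (hnotMem : ∀ᵐ ω ∂μ, ω ∉ A → X ω ≤ t) :
    ∫ ω in A, X ω ∂μ = t * μ.real A + ∫ ω, max (X ω - t) 0 ∂μ := by
  have hmax := integrable_max_sub_zero hX t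
  calc ∫ ω in A, X ω ∂μ = ∫ ω in A, (t + max (X ω - t) 0) ∂μ := by
        refine integral_congr_ae ?_
        filter_upwards [ae_restrict_mem₀ hA, ae_restrict_of_ae hmem] with ω hω htω
        rw [max_eq_left (sub_nonneg.2 (htω hω)), add_sub_cancel]
    _ = t * μ.real A + ∫ ω in A, max (X ω - t) 0 ∂μ := by
        rw [integral_add (integrable_const t) hmax.restrict, setIntegral_const, smul_eq_mul,
          mul_comm]
    _ = t * μ.real A + ∫ ω, max (X ω - t) 0 ∂μ := by
        rw [setIntegral_eq_integral_of_ae_compl_eq_zero]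
        filter_upwards [hnotMem] with ω htω hω
        exact max_eq_right (sub_nonpos.2 (htω hω))

lemma integral_le_add_mul_integral_max_sub [IsProbabilityMeasure Q] {C : ℝ≥0∞} (hC : C ≠ ∞)
    (hQ : Q ≤ C • μ) (hX : Integrable X μ) (t : ℝ) :
    ∫ ω, X ω ∂Q ≤ t + C.toReal * ∫ ω, max (X ω - t) 0 ∂μ := by
  have hmax := integrable_max_sub_zero hX t
  have hmaxQ := (hmax.smul_measure hC).mono_measure hQ
  calc ∫ ω, X ω ∂Q ≤ ∫ ω, (t + max (X ω - t) 0) ∂Q :=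
        integral_mono ((hX.smul_measure hC).mono_measure hQ) ((integrable_const t).add hmaxQ)
          fun ω => by simpa only [add_sub_cancel] using add_le_add_right (le_max_left (X ω - t) 0) t
    _ = t + ∫ ω, max (X ω - t) 0 ∂Q := by
        simp [integral_add (integrable_const t) hmaxQ]
    _ ≤ t + ∫ ω, max (X ω - t) 0 ∂(C • μ) :=
        add_le_add_right (integral_mono_measure hQ (ae_of_all _ fun _ => le_max_right _ _)
          (hmax.smul_measure hC)) t
    _ = t + C.toReal * ∫ ω, max (X ω - t) 0 ∂μ := by rw [integral_smul_measure, smul_eq_mul]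

lemma exists_le_integral_eq (hX : Integrable X μ) {t m : ℝ} (hlt : μ.real {ω | t < X ω} ≤ m)
    (hle : m ≤ μ.real {ω | t ≤ X ω}) :
    ∃ ν ≤ μ, ν.real univ = m ∧ ∫ ω, X ω ∂ν = t * m + ∫ ω, max (X ω - t) 0 ∂μ := by
  set A := {ω | t < X ω}
  set B := {ω | t ≤ X ω}
  -- Interpolating between `μ.restrict A` and `μ.restrict B` takes the right share of `{X = t}`.
  obtain ⟨a, b, ha, hb, hab, hmass⟩ : m ∈ segment ℝ (μ.real A) (μ.real B) :=
    Icc_subset_segment ⟨hlt, hle⟩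
  lift a to ℝ≥0 using ha
  lift b to ℝ≥0 using hb
  rw [smul_eq_mul, smul_eq_mul] at hmass
  refine ⟨a • μ.restrict A + b • μ.restrict B, ?_, ?_, ?_⟩
  · calc a • μ.restrict A + b • μ.restrict B ≤ a • μ + b • μ :=
          add_le_add (smul_le_smul_left _ Measure.restrict_le_self)
            (smul_le_smul_left _ Measure.restrict_le_self)
      _ = μ := by rw [← add_smul, show a + b = 1 by exact_mod_cast hab, one_smul]
  · rw [← hmass, measureReal_add_apply]
    simp only [measureReal_nnreal_smul_apply, measureReal_restrict_apply_univ]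
  · have hXA := setIntegral_eq_mul_add_integral_max_sub hX (t := t)
      (nullMeasurableSet_lt aemeasurable_const hX.aemeasurable)
      (ae_of_all _ fun _ hω => le_of_lt hω) (ae_of_all _ fun _ hω => not_lt.1 hω)
    have hXB := setIntegral_eq_mul_add_integral_max_sub hX (t := t)
      (nullMeasurableSet_le aemeasurable_const hX.aemeasurable)
      (ae_of_all _ fun _ hω => hω) (ae_of_all _ fun _ hω => (not_le.1 hω).le)
    rw [integral_add_measure hX.restrict.smul_measure_nnreal hX.restrict.smul_measure_nnreal,
      integral_smul_nnreal_measure, integral_smul_nnreal_measure, hXA, hXB, NNReal.smul_def,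
      NNReal.smul_def, smul_eq_mul, smul_eq_mul]
    linear_combination t * hmass + (∫ ω, max (X ω - t) 0 ∂μ) * hab

end PositivePart

lemma sInf_setOf_le_le_iff (F : StieltjesFunction ℝ) {q : ℝ} (hbdd : BddBelow {x | q ≤ F x})
    (hne : {x | q ≤ F x}.Nonempty) {x : ℝ} : sInf {x | q ≤ F x} ≤ x ↔ q ≤ F x := by
  refine ⟨fun h => ?_, fun h => csInf_le hbdd h⟩
  have hgt : ∀ y ∈ Ioi x, q ≤ F y := fun y hy => by
    obtain ⟨z, hz, hzy⟩ := exists_lt_of_csInf_lt hne (h.trans_lt hy)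
    exact hz.trans (F.mono hzy.le)
  have hlim : Tendsto F (nhdsWithin x (Ioi x)) (nhds (F x)) :=
    (F.right_continuous x).mono Ioi_subset_Ici_self
  exact ge_of_tendsto hlim (eventually_nhdsWithin_of_forall hgt)

section Quantile

variable {μ : Measure Ω} [IsProbabilityMeasure μ] {X : Ω → ℝ} {p : ℝ}

lemma VaRr_le_iff_le_cdf (hX : AEMeasurable X μ) (hp : p ∈ Ioo (0 : ℝ) 1) {x : ℝ} :
    VaRr μ X p ≤ x ↔ p ≤ cdf (μ.map X) x := by
  have := Measure.isProbabilityMeasure_map hX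
  have hset : {x : ℝ | ENNReal.ofReal p ≤ μ {ω | X ω ≤ x}} = {x | p ≤ cdf (μ.map X) x} := by
    ext y
    have hy : μ {ω | X ω ≤ y} = ENNReal.ofReal (cdf (μ.map X) y) := by
      rw [ofReal_cdf, Measure.map_apply_of_aemeasurable hX measurableSet_Iic]
      rfl
    simp only [mem_ofPred_eq, hy, ENNReal.ofReal_le_ofReal_iff (cdf_nonneg _ y)]
  rw [VaRr, hset]
  refine sInf_setOf_le_le_iff _ ?_ ?_
  · obtain ⟨b, hb⟩ := ((tendsto_cdf_atBot (μ.map X)).eventually_lt_const hp.1).exists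
    exact ⟨b, fun y hy => le_of_not_gt fun hyb =>
      (hb.trans_le hy).not_ge (monotone_cdf (μ.map X) hyb.le)⟩
  · obtain ⟨b, hb⟩ := ((tendsto_cdf_atTop (μ.map X)).eventually_const_lt hp.2).exists
    exact ⟨b, hb.le⟩

lemma monotoneOn_VaRr (hX : AEMeasurable X μ) : MonotoneOn (VaRr μ X) (Ioo 0 1) := by
  intro p hp q hq hpq
  rw [VaRr_le_iff_le_cdf hX hp]
  exact hpq.trans ((VaRr_le_iff_le_cdf hX hq).1 le_rfl)

lemma identDistrib_VaRr (hX : AEMeasurable X μ) :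
    IdentDistrib (VaRr μ X) X (volume.restrict (Ioo 0 1)) μ where
  aemeasurable_fst := aemeasurable_restrict_of_monotoneOn measurableSet_Ioo (monotoneOn_VaRr hX)
  aemeasurable_snd := hX
  map_eq := by
    have := Measure.isProbabilityMeasure_map hX
    refine Measure.ext_of_Iic _ _ fun x => ?_
    set c := cdf (μ.map X) x with hc
    have hpre : VaRr μ X ⁻¹' Iic x ∩ Ioo 0 1 = Iic c ∩ Ioo 0 1 := by
      ext q
      exact and_congr_left fun hq => VaRr_le_iff_le_cdf hX hq
    calc (volume.restrict (Ioo 0 1)).map (VaRr μ X) (Iic x)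
        = volume.restrict (Ioo 0 1) (VaRr μ X ⁻¹' Iic x) :=
          Measure.map_apply_of_aemeasurable
            (aemeasurable_restrict_of_monotoneOn measurableSet_Ioo (monotoneOn_VaRr hX))
            measurableSet_Iic
      _ = volume.restrict (Ioo 0 1) (Iic c) := by
          rw [Measure.restrict_apply' measurableSet_Ioo, hpre,
            Measure.restrict_apply' measurableSet_Ioo]
      _ = volume (Ioc 0 c) := by
          rw [restrict_Ioo_eq_restrict_Ioc, Measure.restrict_apply' measurableSet_Ioc, inter_comm,
            Ioc_inter_Iic, min_eq_right (cdf_le_one _ x)]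
      _ = μ.map X (Iic x) := by rw [Real.volume_Ioc, sub_zero, hc, ofReal_cdf]

lemma measureReal_VaRr_lt_le (hX : AEMeasurable X μ) (hp : p ∈ Ioo (0 : ℝ) 1) :
    μ.real {ω | VaRr μ X p < X ω} ≤ 1 - p := by
  have hsub : VaRr μ X ⁻¹' Ioi (VaRr μ X p) ∩ Ioo 0 1 ⊆ Ioc p 1 := fun q ⟨hlt, hq⟩ =>
    ⟨lt_of_not_ge fun hqp => hlt.not_ge (monotoneOn_VaRr hX hq hp hqp), hq.2.le⟩
  refine ENNReal.toReal_le_of_le_ofReal (sub_nonneg.2 hp.2.le) ?_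
  calc μ (X ⁻¹' Ioi (VaRr μ X p))
      = volume (VaRr μ X ⁻¹' Ioi (VaRr μ X p) ∩ Ioo 0 1) := by
        rw [← (identDistrib_VaRr hX).measure_mem_eq measurableSet_Ioi,
          Measure.restrict_apply' measurableSet_Ioo]
    _ ≤ volume (Ioc p 1) := measure_mono hsub
    _ = ENNReal.ofReal (1 - p) := Real.volume_Ioc

lemma le_measureReal_VaRr_le (hX : AEMeasurable X μ) (hp : p ∈ Ioo (0 : ℝ) 1) :
    1 - p ≤ μ.real {ω | VaRr μ X p ≤ X ω} := by
  have hsub : Ico p 1 ⊆ VaRr μ X ⁻¹' Ici (VaRr μ X p) ∩ Ioo 0 1 := fun q hq =>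
    have hq' : q ∈ Ioo (0 : ℝ) 1 := ⟨hp.1.trans_le hq.1, hq.2⟩
    ⟨monotoneOn_VaRr hX hp hq' hq.1, hq'⟩
  refine (ENNReal.ofReal_le_iff_le_toReal (measure_ne_top μ _)).1 ?_
  calc ENNReal.ofReal (1 - p) = volume (Ico p 1) := Real.volume_Ico.symm
    _ ≤ volume (VaRr μ X ⁻¹' Ici (VaRr μ X p) ∩ Ioo 0 1) := measure_mono hsub
    _ = μ (X ⁻¹' Ici (VaRr μ X p)) := by
        rw [← (identDistrib_VaRr hX).measure_mem_eq measurableSet_Ici,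
          Measure.restrict_apply' measurableSet_Ioo]

lemma ES_zero (hX : AEMeasurable X μ) : ES μ X 0 = ((∫ ω, X ω ∂μ : ℝ) : EReal) := by
  rw [ES, if_neg zero_ne_one, (identDistrib_VaRr hX).integral_eq, sub_zero, inv_one, one_mul]

lemma setIntegral_Ioo_VaRr (hX : Integrable X μ) (hp : p ∈ Ioo (0 : ℝ) 1) :
    ∫ q in Ioo p 1, VaRr μ X q
      = VaRr μ X p * (1 - p) + ∫ ω, max (X ω - VaRr μ X p) 0 ∂μ := by
  have hident := identDistrib_VaRr hX.aemeasurable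
  have hmono := monotoneOn_VaRr hX.aemeasurable
  have hinter : Ioi p ∩ Ioo 0 1 = Ioo p 1 := by
    ext q
    exact ⟨fun hq => ⟨hq.1, hq.2.2⟩, fun hq => ⟨hq.1, hp.1.trans hq.1, hq.2⟩⟩
  have hrestrict : (volume.restrict (Ioo 0 1)).restrict (Ioi p) = volume.restrict (Ioo p 1) := by
    rw [Measure.restrict_restrict measurableSet_Ioi, hinter]
  have hreal : (volume.restrict (Ioo 0 1)).real (Ioi p) = 1 - p := by
    rw [measureReal_restrict_apply measurableSet_Ioi, hinter, Real.volume_real_Ioo_of_le hp.2.le]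
  have hsplit := setIntegral_eq_mul_add_integral_max_sub (hident.integrable_iff.2 hX)
    (A := Ioi p) (t := VaRr μ X p) measurableSet_Ioi.nullMeasurableSet
    ((ae_restrict_mem measurableSet_Ioo).mono fun q hq hpq => hmono hp hq (le_of_lt hpq))
    ((ae_restrict_mem measurableSet_Ioo).mono fun q hq hpq => hmono hq hp (not_lt.1 hpq))
  rw [hrestrict, hreal] at hsplit
  rw [hsplit]
  congr 1
  exact (hident.comp (u := fun x => max (x - VaRr μ X p) 0) (by fun_prop)).integral_eq

lemma ES_eq_VaRr_add (hX : Integrable X μ) (hp : p ∈ Ioo (0 : ℝ) 1) :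
    ES μ X p
      = ((VaRr μ X p + (1 - p)⁻¹ * ∫ ω, max (X ω - VaRr μ X p) 0 ∂μ : ℝ) : EReal) := by
  have hp' : 1 - p ≠ 0 := (sub_pos.2 hp.2).ne'
  rw [ES, if_neg hp.2.ne, setIntegral_Ioo_VaRr hX hp, mul_add, mul_comm (VaRr μ X p),
    inv_mul_cancel_left₀ hp']

end Quantile

section Duality

variable {μ Q : Measure Ω} [IsProbabilityMeasure μ] {X : Ω → ℝ} {p : ℝ}

lemma integral_le_ES [IsProbabilityMeasure Q] (hX : Integrable X μ) (hp : p ∈ Ico (0 : ℝ) 1)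
    (hQ : Q ≤ ENNReal.ofReal (1 - p)⁻¹ • μ) : ((∫ ω, X ω ∂Q : ℝ) : EReal) ≤ ES μ X p := by
  rcases hp.1.eq_or_lt with rfl | hp0
  · have hQμ : Q = μ := Measure.eq_of_le_of_isProbabilityMeasure (by simpa using hQ)
    rw [hQμ, ES_zero hX.aemeasurable]
  · have h := integral_le_add_mul_integral_max_sub ENNReal.ofReal_ne_top hQ hX (VaRr μ X p)
    rw [ENNReal.toReal_ofReal (inv_nonneg.2 (sub_nonneg.2 hp.2.le))] at h
    rw [ES_eq_VaRr_add hX ⟨hp0, hp.2⟩]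
    exact EReal.coe_le_coe h

lemma exists_integral_eq_ES (hX : Integrable X μ) (hp : p ∈ Ico (0 : ℝ) 1) :
    ∃ Q : Measure Ω, IsProbabilityMeasure Q ∧ Q ≤ ENNReal.ofReal (1 - p)⁻¹ • μ ∧
      ((∫ ω, X ω ∂Q : ℝ) : EReal) = ES μ X p := by
  rcases hp.1.eq_or_lt with rfl | hp0
  · exact ⟨μ, inferInstance, by simp, (ES_zero hX.aemeasurable).symm⟩
  replace hp : p ∈ Ioo (0 : ℝ) 1 := ⟨hp0, hp.2⟩
  have hp' : 0 < 1 - p := sub_pos.2 hp.2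
  obtain ⟨ν, hν, hνuniv, hνX⟩ := exists_le_integral_eq hX
    (measureReal_VaRr_lt_le hX.aemeasurable hp) (le_measureReal_VaRr_le hX.aemeasurable hp)
  refine ⟨ENNReal.ofReal (1 - p)⁻¹ • ν, ?_, smul_le_smul_left _ hν, ?_⟩
  · rw [isProbabilityMeasure_iff_real, measureReal_ennreal_smul_apply, hνuniv,
      ENNReal.toReal_ofReal (inv_nonneg.2 hp'.le), inv_mul_cancel₀ hp'.ne']
  · rw [ES_eq_VaRr_add hX hp, integral_smul_measure, hνX, smul_eq_mul,
      ENNReal.toReal_ofReal (inv_nonneg.2 hp'.le), mul_add, mul_comm (VaRr μ X p),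
      inv_mul_cancel_left₀ hp'.ne']

lemma exists_le_integral_of_lt_essSup (hX : Integrable X μ) {a : EReal}
    (ha : a < essSup (fun ω => (X ω : EReal)) μ) :
    ∃ Q ∈ boundedDensityMeasures μ, a ≤ ((∫ ω, X ω ∂Q : ℝ) : EReal) := by
  obtain ⟨t, hat, ht⟩ := EReal.lt_iff_exists_real_btwn.1 ha
  set A := {ω | t < X ω}
  have hA : NullMeasurableSet A μ := nullMeasurableSet_lt aemeasurable_const hX.aemeasurable
  have hμA : μ A ≠ 0 := fun h0 => ht.not_ge <| essSup_le_of_ae_le _ <|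
    (measure_eq_zero_iff_ae_notMem.1 h0).mono fun ω hω => EReal.coe_le_coe (not_lt.1 hω)
  have hC : (μ A)⁻¹ ≠ ∞ := ENNReal.inv_ne_top.2 hμA
  have := cond_isProbabilityMeasure hμA
  have hint : Integrable X μ[|A] := hX.restrict.smul_measure hC
  have hle : μ[|A] ≤ (μ A)⁻¹ • μ := smul_le_smul_left _ Measure.restrict_le_self
  have hgt : ∀ᵐ ω ∂μ[|A], t ≤ X ω :=
    Measure.ae_smul_measure ((ae_restrict_mem₀ hA).mono fun _ hω => le_of_lt hω) _
  refine ⟨μ[|A], mem_boundedDensityMeasures_of_le_smul hC hle, hat.le.trans ?_⟩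
  simpa using integral_mono_ae (integrable_const t) hint hgt

lemma integral_le_ES_densityLevel (hX : Integrable X μ) (hQ : Q ∈ boundedDensityMeasures μ) :
    ((∫ ω, X ω ∂Q : ℝ) : EReal) ≤ ES μ X (densityLevel μ Q) :=
  have := hQ.1
  have hlevel := densityLevel_mem_Ico hQ
  integral_le_ES hX hlevel ((densityLevel_le_iff hQ hlevel.2).1 le_rfl)

lemma exists_densityLevel_le_of_lt_ES (hX : Integrable X μ) (hp : p ∈ Icc (0 : ℝ) 1) {a : EReal}
    (ha : a < ES μ X p) :
    ∃ Q ∈ boundedDensityMeasures μ, densityLevel μ Q ≤ p ∧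
      a ≤ ((∫ ω, X ω ∂Q : ℝ) : EReal) := by
  rcases hp.2.eq_or_lt with rfl | hp1
  · rw [ES, if_pos rfl] at ha
    obtain ⟨Q, hQ, haQ⟩ := exists_le_integral_of_lt_essSup hX ha
    exact ⟨Q, hQ, (densityLevel_mem_Ico hQ).2.le, haQ⟩
  · obtain ⟨Q, _, hQle, hQX⟩ := exists_integral_eq_ES hX ⟨hp.1, hp1⟩
    have hQ := mem_boundedDensityMeasures_of_le_smul ENNReal.ofReal_ne_top hQle
    exact ⟨Q, hQ, (densityLevel_le_iff hQ hp1).2 hQle, hQX ▸ ha.le⟩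

theorem stmt9_general {g : ℝ → EReal} (hg : MonotoneOn g (Icc 0 1)) (hX : Integrable X μ) :
    adjES μ g X
      = ⨆ Q ∈ boundedDensityMeasures μ,
          (((∫ ω, X ω ∂Q : ℝ) : EReal) - g (densityLevel μ Q)) := by
  refine le_antisymm (iSup₂_le fun p hp => ?_) (iSup₂_le fun Q hQ => ?_)
  -- Approximating `ES μ X p` strictly from below avoids the indeterminate `⊤ - ⊤` at `p = 1`.
  · refine EReal.add_le_of_forall_lt fun a ha b hb => ?_
    obtain ⟨Q, hQ, hQp, haQ⟩ := exists_densityLevel_le_of_lt_ES hX hp ha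
    have hgQ : g (densityLevel μ Q) ≤ g p :=
      hg (Ico_subset_Icc_self (densityLevel_mem_Ico hQ)) hp hQp
    calc a + b ≤ ((∫ ω, X ω ∂Q : ℝ) : EReal) - g p := add_le_add haQ hb.le
      _ ≤ ((∫ ω, X ω ∂Q : ℝ) : EReal) - g (densityLevel μ Q) := EReal.sub_le_sub le_rfl hgQ
      _ ≤ _ := le_iSup₂_of_le Q hQ le_rfl
  · calc ((∫ ω, X ω ∂Q : ℝ) : EReal) - g (densityLevel μ Q)
        ≤ ES μ X (densityLevel μ Q) - g (densityLevel μ Q) :=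
          EReal.sub_le_sub (integral_le_ES_densityLevel hX hQ) le_rfl
      _ ≤ adjES μ g X :=
          le_iSup₂_of_le (f := fun p (_ : p ∈ Icc (0 : ℝ) 1) => ES μ X p - g p) _
            (Ico_subset_Icc_self (densityLevel_mem_Ico hQ)) le_rfl

end Duality

/-- Dual representation: for `g ∈ 𝒢` and `X ∈ L¹`,
`ES^g(X) = sup_{Q ∈ 𝒫^∞_P} (E_Q[X] - g(1 - ‖dQ/dP‖_∞⁻¹))`, where `𝒫^∞_P` is the set
of probability measures absolutely continuous w.r.t. `μ` with essentially bounded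
density. -/
theorem stmt9 (μ : Measure Ω) [IsProbabilityMeasure μ] (hatomless : Atomless μ)
    (g : ℝ → EReal) (hg : IsRiskProfile g) (X : Ω → ℝ) (hX : Integrable X μ) :
    adjES μ g X
      = ⨆ Q ∈ {Q : Measure Ω | IsProbabilityMeasure Q ∧ Q ≪ μ ∧
            essSup (Q.rnDeriv μ) μ < ⊤},
          (((∫ ω, X ω ∂Q : ℝ) : EReal) - g (1 - ((essSup (Q.rnDeriv μ) μ).toReal)⁻¹)) := by
  exact stmt9_general hg.1 hX
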